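/- Let n ≥ 1, r_1, …, r_n > 0, ε_1, …, ε_n ∈ {−1, 1}, and let k ≥ 2 be an integer. For u(s_1, …, s_n) = cos(k s_1 / r_1) one has ∫_{[0,2πr_1]×…×[0,2πr_n]} ( ( Σ_{j=1}^n ε_j ∂_j∂_j u )² − Σ_{j=1}^n (∂_j u)²/r_j² + 2 Σ_{1≤j<k≤n} ε_j ε_k (∂_j u)(∂_k u)/(r_j r_k) ) = ( Π_{j=2}^n 2π r_j ) · π (k⁴ − k²)/r_1³, and this value is strictly positive. -/

import Mathlib

/-!
The potential depends on one coordinate only, so the mixed terms of the integrand vanish and Fubini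
reduces the integral to that circle, the other circles contributing their lengths `2πr_j`. There
`cos²` and `sin²` both have mean `1/2` over whole periods, so with frequency `a = m/r₁` and
`ε₁² = 1` the integral is `(a⁴ − a²/r₁²) · πr₁ = π(m⁴ − m²)/r₁³`.
-/

open MeasureTheory Real

/-- The partial derivative `∂_j u` of a function `u : ℝⁿ → ℝ`. -/
noncomputable def pd {n : ℕ} (j : Fin n) (u : (Fin n → ℝ) → ℝ) (x : Fin n → ℝ) : ℝ :=
  fderiv ℝ u x (Pi.single j 1)

section Calculus

variable {n : ℕ} {i j : Fin n} {g : ℝ → ℝ}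

theorem pd_comp_apply {g' : ℝ} {x : Fin n → ℝ} (hg : HasDerivAt g g' (x i)) :
    pd j (fun y ↦ g (y i)) x = Pi.single (M := fun _ ↦ ℝ) i g' j := by
  have h : HasFDerivAt (g ∘ fun y : Fin n → ℝ ↦ y i) _ x :=
    hg.comp_hasFDerivAt x (hasFDerivAt_apply (𝕜 := ℝ) i x)
  rw [Function.comp_def] at h
  simp [pd, h.fderiv, Pi.single_apply, eq_comm]

theorem pd_comp_apply_self {g' : ℝ → ℝ} (hg : ∀ t, HasDerivAt g (g' t) t) :
    pd i (fun x ↦ g (x i)) = fun x ↦ g' (x i) := by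
  funext x
  rw [pd_comp_apply (hg (x i)), Pi.single_eq_same]

theorem pd_comp_apply_of_ne (hg : Differentiable ℝ g) (hj : j ≠ i) :
    pd j (fun x ↦ g (x i)) = 0 := by
  funext x
  rw [pd_comp_apply (hg (x i)).hasDerivAt, Pi.single_eq_of_ne hj, Pi.zero_apply]

theorem pd_zero : pd j (0 : (Fin n → ℝ) → ℝ) = 0 := by
  funext x
  simp [pd]

end Calculus

section Integration

theorem setIntegral_pi_comp_apply {ι 𝕜 : Type*} [Fintype ι] [DecidableEq ι] [RCLike 𝕜]
    {X : ι → Type*} [∀ j, MeasurableSpace (X j)] (μ : ∀ j, Measure (X j)) [∀ j, SigmaFinite (μ j)]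
    (s : ∀ j, Set (X j)) (i : ι) (f : X i → 𝕜) :
    ∫ x in Set.univ.pi s, f (x i) ∂Measure.pi μ =
      (∏ j ∈ Finset.univ.erase i, ((μ j).real (s j) : 𝕜)) * ∫ t in s i, f t ∂μ i := by
  let F : ∀ j, X j → 𝕜 := Function.update (fun _ _ ↦ 1) i f
  have F_self : F i = f := Function.update_self ..
  have F_of_mem_erase {j : ι} (hj : j ∈ Finset.univ.erase i) : F j = fun _ ↦ 1 :=
    Function.update_of_ne (Finset.ne_of_mem_erase hj) ..
  have prod_F (x : ∀ j, X j) : ∏ j, F j (x j) = f (x i) := by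
    rw [← Finset.prod_erase_mul _ _ (Finset.mem_univ i), F_self,
      Finset.prod_eq_one fun j hj ↦ by rw [F_of_mem_erase hj], one_mul]
  simp_rw [← prod_F]
  rw [Measure.restrict_pi_pi, integral_fintype_prod_eq_prod,
    ← Finset.prod_erase_mul _ _ (Finset.mem_univ i), F_self]
  congr 1
  refine Finset.prod_congr rfl fun j hj ↦ ?_
  simp [F_of_mem_erase hj, RCLike.real_smul_eq_coe_mul]

theorem integral_comp_mul_div {E : Type*} [NormedAddCommGroup E] [NormedSpace ℝ E] {c r : ℝ}
    (hc : c ≠ 0) (hr : r ≠ 0) (R : ℝ) (f : ℝ → E) :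
    ∫ t in 0..R * r, f (c * t / r) = (r / c) • ∫ t in 0..c * R, f t := by
  have upper_limit : c / r * (R * r) = c * R := by field_simp
  simp_rw [mul_div_right_comm]
  rw [intervalIntegral.integral_comp_mul_left _ (div_ne_zero hc hr), upper_limit, mul_zero,
    inv_div]

variable {m : ℤ} {r : ℝ}

theorem integral_cos_int_mul_div_sq (hm : m ≠ 0) (hr : r ≠ 0) :
    ∫ t in 0..2 * π * r, cos (m * t / r) ^ 2 = π * r := by
  have hm' : (m : ℝ) ≠ 0 := Int.cast_ne_zero.mpr hm
  rw [integral_comp_mul_div hm' hr _ (cos · ^ 2), integral_cos_sq, sin_zero,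
    sin_periodic.int_mul_eq m, sin_zero, smul_eq_mul]
  field_simp
  ring

theorem integral_sin_int_mul_div_sq (hm : m ≠ 0) (hr : r ≠ 0) :
    ∫ t in 0..2 * π * r, sin (m * t / r) ^ 2 = π * r := by
  have hm' : (m : ℝ) ≠ 0 := Int.cast_ne_zero.mpr hm
  rw [integral_comp_mul_div hm' hr _ (sin · ^ 2), integral_sin_sq, sin_zero,
    sin_periodic.int_mul_eq m, sin_zero, smul_eq_mul]
  field_simp
  ring

end Integration

section SecondVariation

variable {n : ℕ}

/-- The integrand of the second variation of the volume of the torus `S¹(r₁) × … × S¹(rₙ)` at the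
Hamiltonian variation with potential `u`, in the arc length coordinates of the circles. The weights
`ε j` are the signs of the flat Hermitian form, but arbitrary real weights are allowed. -/
noncomputable def secondVariationDensity (r ε : Fin n → ℝ) (u : (Fin n → ℝ) → ℝ)
    (x : Fin n → ℝ) : ℝ :=
  (∑ j, ε j * pd j (pd j u) x) ^ 2 - ∑ j, (pd j u x) ^ 2 / (r j) ^ 2
    + 2 * ∑ j, ∑ k, (if j < k then ε j * ε k * pd j u x * pd k u x / (r j * r k) else 0)

/-- The second variation of the volume of the torus `S¹(r₁) × … × S¹(rₙ)` at the Hamiltonian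
variation with potential `u`, integrated over the fundamental box `∏ j, [0, 2πr_j]`; `u` is not
required to be periodic. -/
noncomputable def secondVariation (r ε : Fin n → ℝ) (u : (Fin n → ℝ) → ℝ) : ℝ :=
  ∫ x in Set.univ.pi (fun j ↦ Set.Icc (0 : ℝ) (2 * π * r j)), secondVariationDensity r ε u x

variable {r : Fin n → ℝ} (ε : Fin n → ℝ) (i : Fin n) {g g' g'' : ℝ → ℝ}

theorem secondVariationDensity_comp_apply (r : Fin n → ℝ) (hg : ∀ t, HasDerivAt g (g' t) t)
    (hg' : ∀ t, HasDerivAt g' (g'' t) t) (x : Fin n → ℝ) :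
    secondVariationDensity r ε (fun y ↦ g (y i)) x =
      ε i ^ 2 * g'' (x i) ^ 2 - g' (x i) ^ 2 / r i ^ 2 := by
  have pd_of_ne {j : Fin n} (hj : j ≠ i) : pd j (fun y ↦ g (y i)) = 0 :=
    pd_comp_apply_of_ne (fun t ↦ (hg t).differentiableAt) hj
  have laplacian :
      ∑ j, ε j * pd j (pd j fun y ↦ g (y i)) x = ε i * g'' (x i) := by
    rw [Fintype.sum_eq_single i fun j hj ↦ by simp [pd_of_ne hj, pd_zero],
      pd_comp_apply_self hg, pd_comp_apply_self hg']
  have gradient :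
      ∑ j, pd j (fun y ↦ g (y i)) x ^ 2 / r j ^ 2 = g' (x i) ^ 2 / r i ^ 2 := by
    rw [Fintype.sum_eq_single i fun j hj ↦ by simp [pd_of_ne hj], pd_comp_apply_self hg]
  have cross_terms :
      ∑ j, ∑ k, (if j < k then ε j * ε k * pd j (fun y ↦ g (y i)) x *
        pd k (fun y ↦ g (y i)) x / (r j * r k) else 0) = 0 := by
    refine Finset.sum_eq_zero fun j _ ↦ Finset.sum_eq_zero fun k _ ↦ ite_eq_right_iff.mpr ?_
    intro hjk
    obtain hj | hk : j ≠ i ∨ k ≠ i := by grind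
    · simp [pd_of_ne hj]
    · simp [pd_of_ne hk]
  rw [secondVariationDensity, laplacian, gradient, cross_terms]
  ring

theorem secondVariation_comp_apply (hr : ∀ j, 0 ≤ r j) (hg : ∀ t, HasDerivAt g (g' t) t)
    (hg' : ∀ t, HasDerivAt g' (g'' t) t) :
    secondVariation r ε (fun x ↦ g (x i)) =
      (∏ j ∈ Finset.univ.erase i, (2 * π * r j)) *
        ∫ t in 0..2 * π * r i, (ε i ^ 2 * g'' t ^ 2 - g' t ^ 2 / r i ^ 2) := by
  have length_nonneg (j : Fin n) : 0 ≤ 2 * π * r j := mul_nonneg two_pi_pos.le (hr j)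
  simp_rw [secondVariation, secondVariationDensity_comp_apply ε i r hg hg']
  rw [volume_pi, setIntegral_pi_comp_apply (X := fun _ ↦ ℝ) _ _ i
      (fun t ↦ ε i ^ 2 * g'' t ^ 2 - g' t ^ 2 / r i ^ 2),
    integral_Icc_eq_integral_Ioc, ← intervalIntegral.integral_of_le (length_nonneg i)]
  simp [Real.volume_real_Icc_of_le (length_nonneg _)]

theorem secondVariation_cos (hr : ∀ j, 0 < r j) {m : ℤ} (hm : m ≠ 0) :
    secondVariation r ε (fun x ↦ cos (m * x i / r i)) =
      (∏ j ∈ Finset.univ.erase i, (2 * π * r j)) *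
        (π * (ε i ^ 2 * (m : ℝ) ^ 4 - (m : ℝ) ^ 2) / r i ^ 3) := by
  have hri : r i ≠ 0 := (hr i).ne'
  have phase (t : ℝ) : HasDerivAt (fun t ↦ m * t / r i) (m / r i) t := by
    simpa using ((hasDerivAt_id t).const_mul (m : ℝ)).div_const (r i)
  rw [secondVariation_comp_apply ε i (fun j ↦ (hr j).le) (fun t ↦ (phase t).cos)
    (fun t ↦ (phase t).sin.neg.mul_const (m / r i))]
  congr 1
  calc
    _ = ∫ t in 0..2 * π * r i, (ε i ^ 2 * (m / r i) ^ 4 * cos (m * t / r i) ^ 2 -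
          m ^ 2 / r i ^ 4 * sin (m * t / r i) ^ 2) := by
      congr 1 with t
      field_simp
    _ = ε i ^ 2 * (m / r i) ^ 4 * (π * r i) - m ^ 2 / r i ^ 4 * (π * r i) := by
      rw [intervalIntegral.integral_sub (Continuous.intervalIntegrable (by fun_prop) _ _)
          (Continuous.intervalIntegrable (by fun_prop) _ _),
        intervalIntegral.integral_const_mul, intervalIntegral.integral_const_mul,
        integral_cos_int_mul_div_sq hm hri, integral_sin_int_mul_div_sq hm hri]
    _ = π * (ε i ^ 2 * (m : ℝ) ^ 4 - (m : ℝ) ^ 2) / r i ^ 3 := by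
      field_simp

theorem torus_second_variation_positive_direction_general (hr : ∀ j, 0 < r j) {m : ℤ}
    (hm : 1 < |ε i * m|) :
    secondVariation r ε (fun x ↦ cos (m * x i / r i)) =
        (∏ j ∈ Finset.univ.erase i, (2 * π * r j)) *
          (π * (ε i ^ 2 * (m : ℝ) ^ 4 - (m : ℝ) ^ 2) / r i ^ 3) ∧
      0 < (∏ j ∈ Finset.univ.erase i, (2 * π * r j)) *
          (π * (ε i ^ 2 * (m : ℝ) ^ 4 - (m : ℝ) ^ 2) / r i ^ 3) := by
  have hm_ne : m ≠ 0 := by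
    rintro rfl
    norm_num at hm
  refine ⟨secondVariation_cos ε i hr hm_ne, mul_pos ?_ ?_⟩
  · exact Finset.prod_pos fun j _ ↦ mul_pos two_pi_pos (hr j)
  · have excess_pos : 0 < (ε i * m) ^ 2 - 1 := sub_pos.mpr ((one_lt_sq_iff_one_lt_abs _).mpr hm)
    have numerator_pos : 0 < ε i ^ 2 * (m : ℝ) ^ 4 - (m : ℝ) ^ 2 :=
      calc
        0 < (m : ℝ) ^ 2 * ((ε i * m) ^ 2 - 1) := by positivity
        _ = ε i ^ 2 * (m : ℝ) ^ 4 - (m : ℝ) ^ 2 := by ring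
    exact div_pos (mul_pos pi_pos numerator_pos) (pow_pos (hr i) 3)

end SecondVariation

/-- For the test function `u = cos(m s₁/r₁)` with integer `m ≥ 2`, the second
variation of the volume of the torus `S¹(r₁) × … × S¹(rₙ)` (here with `n + 1 ≥ 1` factors)
equals `(Π_{j≥2} 2π r_j) · π(m⁴ − m²)/r₁³`, which is strictly positive. -/
theorem torus_second_variation_positive_direction
    (n : ℕ) (r ε : Fin (n + 1) → ℝ) (hr : ∀ j, 0 < r j)
    (hε : ∀ j, ε j = -1 ∨ ε j = 1) (m : ℕ) (hm : 2 ≤ m)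
    (u : (Fin (n + 1) → ℝ) → ℝ)
    (hu : u = fun x => Real.cos ((m : ℝ) * x 0 / r 0)) :
    (∫ x in Set.univ.pi (fun j => Set.Icc (0 : ℝ) (2 * π * r j)),
        ((∑ j, ε j * pd j (pd j u) x) ^ 2 - ∑ j, (pd j u x) ^ 2 / (r j) ^ 2
          + 2 * ∑ j, ∑ k, (if j < k then ε j * ε k * pd j u x * pd k u x / (r j * r k) else 0)))
      = (∏ j ∈ Finset.univ.erase (0 : Fin (n + 1)), (2 * π * r j))
          * (π * ((m : ℝ) ^ 4 - (m : ℝ) ^ 2) / (r 0) ^ 3) ∧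
    0 < (∏ j ∈ Finset.univ.erase (0 : Fin (n + 1)), (2 * π * r j))
          * (π * ((m : ℝ) ^ 4 - (m : ℝ) ^ 2) / (r 0) ^ 3) := by
  subst hu
  have hε_sq : ε 0 ^ 2 = 1 := sq_eq_one_iff.mpr (hε 0).symm
  have one_lt_abs : 1 < |ε 0 * (m : ℤ)| := by
    rw [← one_lt_sq_iff_one_lt_abs, mul_pow, hε_sq, one_mul]
    exact_mod_cast Nat.one_lt_pow two_ne_zero hm
  simpa only [hε_sq, one_mul, Int.cast_natCast, secondVariation, secondVariationDensity] using
    torus_second_variation_positive_direction_general ε 0 hr one_lt_abs
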